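/- Assume the Riemann Hypothesis is false. Then γ_r < e^{−γ} for infinitely many integers r. In particular, Γ := inf_{r ≥ 0} γ_r < e^{−γ}. -/

import Mathlib

open Filter

/-- Generalized Euler constant for a finite set of primes `P`:
`γ(P) = ∏_{p∈P}(1 - 1/p) * (γ + ∑_{p∈P} log p / (p-1))`. -/
noncomputable def gammaP (P : Finset ℕ) : ℝ :=
  (∏ p ∈ P, (1 - 1 / (p : ℝ))) *
    (Real.eulerMascheroniConstant + ∑ p ∈ P, Real.log p / ((p : ℝ) - 1))

/-- `γ_r = γ({p_1, …, p_r})`, the generalized Euler constant for the first `r` primes. -/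
noncomputable def gammaR (r : ℕ) : ℝ :=
  gammaP ((Finset.range r).image (Nat.nth Nat.Prime))

/-!
Write `g` for `gammaMajorant`. With `P` the set of primes up to `e ^ t`, the tangent line of `log`
gives `t * log (e ^ γ * γ(P)) ≤ g t`, so `g` is eventually nonnegative if only finitely many `γ_r`
are below `e ^ (-γ)`. The Laplace transform `ĝ` of `g` satisfies
`x ^ 2 * ĝ x = γ * x + R x - log (ζ₁ (x + 1))` for `2 < x`, where `ζ₁ s = (s - 1) * ζ s` and `R` is
holomorphic on `-1/2 < re s`. The right-hand side vanishes to second order at `0`, and it continues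
along the real axis to `(-1/2, ∞)` because `ζ₁` is positive on `(0, ∞)`. For an eventually
nonnegative `g`, Landau's theorem on the singularity of a Laplace transform then makes `ĝ`
holomorphic on `-1/2 < re s`, and there `exp (γ * s + R s - s ^ 2 * ĝ s) = ζ₁ (s + 1)`. Hence `ζ₁`
has no zero in `1/2 < re s`, which is the Riemann hypothesis.
-/

section PringsheimLandau

open MeasureTheory ProbabilityTheory Topology

lemma integrable_of_hasSum {α ι E : Type*} {m : MeasurableSpace α} {μ : Measure α}
    [NormedAddCommGroup E] [Countable ι] {F : ι → α → E} {f : α → E}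
    (hF : ∀ i, Integrable (F i) μ) (hsum : Summable fun i ↦ ∫ a, ‖F i a‖ ∂μ)
    (hf : ∀ᵐ a ∂μ, HasSum (F · a) (f a)) : Integrable f μ := by
  refine ⟨aestronglyMeasurable_of_tendsto_ae atTop
    (fun s ↦ Finset.aestronglyMeasurable_fun_sum s fun i _ ↦ (hF i).1) hf, ?_⟩
  have hle : ∀ᵐ a ∂μ, ‖f a‖ₑ ≤ ∑' i, ‖F i a‖ₑ := by
    filter_upwards [hf] with a ha
    rw [← ha.tsum_eq]
    exact enorm_tsum_le_tsum_enorm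
  refine (lintegral_mono_ae hle).trans_lt ?_
  rw [lintegral_tsum fun i ↦ (hF i).1.enorm]
  simp_rw [← ofReal_integral_norm_eq_lintegral_enorm (hF _)]
  exact hsum.tsum_ofReal_lt_top

lemma eventuallyEq_of_eventually_ofReal_eq {E : Type*} [NormedAddCommGroup E] [NormedSpace ℂ E]
    {f g : ℂ → E} {c : ℝ} (hf : AnalyticAt ℂ f c) (hg : AnalyticAt ℂ g c)
    (h : ∀ᶠ x : ℝ in 𝓝 c, f x = g x) : f =ᶠ[𝓝 (c : ℂ)] g := by
  refine (hf.frequently_eq_iff_eventually_eq hg).1 ?_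
  have hmaps : Tendsto ((↑) : ℝ → ℂ) (𝓝[≠] c) (𝓝[≠] (c : ℂ)) :=
    Complex.continuous_ofReal.continuousAt.continuousWithinAt.tendsto_nhdsWithin
      fun x hx ↦ Complex.ofReal_injective.ne hx
  exact hmaps.frequently (h.filter_mono nhdsWithin_le_nhds).frequently

lemma pow_add_neg_pow_nonneg (a : ℝ) (n : ℕ) : 0 ≤ a ^ n + (-a) ^ n := by
  rcases n.even_or_odd with hn | hn
  · exact add_nonneg (hn.pow_nonneg _) (hn.pow_nonneg _)
  · rw [hn.neg_pow, add_neg_cancel]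

variable {Ω : Type*} {m : MeasurableSpace Ω} {μ : Measure Ω} {X : Ω → ℝ} {H : ℂ → ℂ} {c r : ℝ}

lemma integrable_mul_pow_div_factorial_mul_exp (hc : c ∈ interior (integrableExpSet X μ)) (t : ℝ)
    (n : ℕ) : Integrable (fun ω ↦ (t * X ω) ^ n / n.factorial * Real.exp (c * X ω)) μ := by
  refine ((integrable_pow_mul_exp_of_mem_interior_integrableExpSet hc n).const_mul
    (t ^ n / n.factorial)).congr (.of_forall fun ω ↦ ?_)
  simp only [mul_pow]
  ring

lemma summable_integral_mul_pow_div_factorial_mul_exp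
    (hc : c ∈ interior (integrableExpSet X μ)) (hH : DifferentiableOn ℂ H (Metric.ball (c : ℂ) r))
    (hcH : complexMGF X μ =ᶠ[𝓝 (c : ℂ)] H) {t : ℝ} (ht : |t| < r) :
    Summable fun n : ℕ ↦ ∫ ω, (t * X ω) ^ n / n.factorial * Real.exp (c * X ω) ∂μ := by
  have hz : (c : ℂ) + t ∈ Metric.ball (c : ℂ) r := by simpa using ht
  refine Complex.summable_ofReal.1
    ((Complex.hasSum_taylorSeries_on_ball hH hz).summable.congr fun n ↦ ?_)
  rw [← hcH.iteratedDeriv_eq n, iteratedDeriv_complexMGF (by simpa using hc),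
    ← integral_complex_ofReal, add_sub_cancel_left, ← integral_smul, ← integral_smul]
  refine integral_congr_ae (.of_forall fun ω ↦ ?_)
  push_cast [smul_eq_mul]
  ring

-- Adding the Taylor expansions at displacements `t` and `-t` from `c` makes every term nonnegative.
lemma Ioo_subset_integrableExpSet (hc : c ∈ interior (integrableExpSet X μ))
    (hH : DifferentiableOn ℂ H (Metric.ball (c : ℂ) r)) (hcH : complexMGF X μ =ᶠ[𝓝 (c : ℂ)] H) :
    Set.Ioo (c - r) (c + r) ⊆ integrableExpSet X μ := by
  intro x hx
  obtain ⟨t, rfl⟩ : ∃ t, x = c + t := ⟨x - c, by ring⟩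
  have ht : |t| < r := abs_lt.2 ⟨by linarith [hx.1], by linarith [hx.2]⟩
  let F : ℕ → Ω → ℝ := fun n ω ↦ (t * X ω) ^ n / n.factorial * Real.exp (c * X ω) +
    (-t * X ω) ^ n / n.factorial * Real.exp (c * X ω)
  have hF (n : ℕ) : Integrable (F n) μ :=
    (integrable_mul_pow_div_factorial_mul_exp hc t n).add
      (integrable_mul_pow_div_factorial_mul_exp hc (-t) n)
  have hF_nonneg (n : ℕ) (ω : Ω) : 0 ≤ F n ω := by
    have hpow := pow_add_neg_pow_nonneg (t * X ω) n
    rw [← neg_mul] at hpow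
    have : F n ω = ((t * X ω) ^ n + (-t * X ω) ^ n) / n.factorial * Real.exp (c * X ω) := by
      simp only [F]
      ring
    rw [this]
    positivity
  have hF_sum : Summable fun n ↦ ∫ ω, ‖F n ω‖ ∂μ := by
    refine ((summable_integral_mul_pow_div_factorial_mul_exp hc hH hcH ht).add
      (summable_integral_mul_pow_div_factorial_mul_exp hc hH hcH
        ((abs_neg t).trans_lt ht))).congr fun n ↦ ?_
    simp_rw [Real.norm_of_nonneg (hF_nonneg n _), F]
    exact (integral_add (integrable_mul_pow_div_factorial_mul_exp hc t n)
      (integrable_mul_pow_div_factorial_mul_exp hc (-t) n)).symm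
  have hexp (s : ℝ) (ω : Ω) : HasSum (fun n : ℕ ↦ (s * X ω) ^ n / n.factorial *
      Real.exp (c * X ω)) (Real.exp ((c + s) * X ω)) := by
    rw [add_mul, add_comm, Real.exp_add, Real.exp_eq_exp_ℝ]
    exact (NormedSpace.expSeries_div_hasSum_exp (s * X ω)).mul_right _
  have hint := integrable_of_hasSum hF hF_sum
    (.of_forall fun ω ↦ (hexp t ω).add (hexp (-t) ω))
  have hX := aemeasurable_of_mem_interior_integrableExpSet hc
  refine hint.mono' (by fun_prop) (.of_forall fun ω ↦ ?_)
  rw [Real.norm_of_nonneg (Real.exp_nonneg _)]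
  exact le_add_of_nonneg_right (Real.exp_nonneg _)

lemma subset_interior_integrableExpSet_of_differentiableOn {I : Set ℝ} {U : Set ℂ}
    (hI : IsPreconnected I) (hU : IsOpen U) (hIU : ∀ x ∈ I, (x : ℂ) ∈ U)
    (hH : DifferentiableOn ℂ H U) (hcI : c ∈ I) (hc : c ∈ interior (integrableExpSet X μ))
    (hcH : complexMGF X μ =ᶠ[𝓝 (c : ℂ)] H) : I ⊆ interior (integrableExpSet X μ) := by
  let V : Set ℝ := {x | x ∈ interior (integrableExpSet X μ) ∧ complexMGF X μ =ᶠ[𝓝 (x : ℂ)] H}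
  have hV : IsOpen V := isOpen_interior.inter
    (isOpen_setOfPred_eventually_nhds.preimage Complex.continuous_ofReal)
  refine (hI.subset_of_closure_inter_subset hV ⟨c, hcI, hc, hcH⟩ ?_).trans fun x hx ↦ hx.1
  rintro x ⟨hxV, hxI⟩
  obtain ⟨ε, hε, hball⟩ := Metric.isOpen_iff.1 hU x (hIU x hxI)
  obtain ⟨y, ⟨hy, hyH⟩, hxy⟩ := Metric.mem_closure_iff.1 hxV (ε / 2) (half_pos hε)
  have hballU : Metric.ball (y : ℂ) (ε / 2) ⊆ U := by
    refine (Metric.ball_subset_ball' ?_).trans hball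
    rw [Complex.dist_of_im_eq (by simp)]
    simp only [Complex.ofReal_re]
    linarith [dist_comm x y]
  have hyS := Ioo_subset_integrableExpSet hy (hH.mono hballU) hyH
  have hIoo : Set.Ioo (y - ε / 2) (y + ε / 2) ⊆ interior (integrableExpSet X μ) :=
    interior_maximal hyS isOpen_Ioo
  rw [← Real.ball_eq_Ioo] at hIoo
  have hre {z : ℂ} (hz : z ∈ Metric.ball (y : ℂ) (ε / 2)) : z.re ∈ Metric.ball y (ε / 2) := by
    rw [Metric.mem_ball, Real.dist_eq]
    exact (Complex.abs_re_le_norm (z - y)).trans_lt (mem_ball_iff_norm.1 hz)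
  have heq : Set.EqOn (complexMGF X μ) H (Metric.ball (y : ℂ) (ε / 2)) :=
    AnalyticOnNhd.eqOn_of_preconnected_of_eventuallyEq
      (fun z hz ↦ analyticAt_complexMGF (hIoo (hre hz)))
      ((hH.mono hballU).analyticOnNhd Metric.isOpen_ball) (convex_ball _ _).isPreconnected
      (Metric.mem_ball_self (half_pos hε)) hyH
  have hx : (x : ℂ) ∈ Metric.ball (y : ℂ) (ε / 2) := by
    rwa [Metric.mem_ball, Complex.dist_of_im_eq (by simp)]
  exact ⟨hIoo hxy, heq.eventuallyEq_of_mem (Metric.isOpen_ball.mem_nhds hx)⟩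

end PringsheimLandau

section LaplaceTransform

open MeasureTheory ProbabilityTheory Set

/-- The one-sided Laplace transform of a real function, as a function of a complex variable. -/
noncomputable def laplaceTransform (g : ℝ → ℝ) (z : ℂ) : ℂ :=
  ∫ t in Ioi (0 : ℝ), g t * Complex.exp (-z * t)

/-- The measure on `(0, ∞)` whose density is the positive part of `g`. Its moment generating
function along `t ↦ -t` is the Laplace transform of that positive part. -/
noncomputable def posPartMeasure (g : ℝ → ℝ) : Measure ℝ :=
  (volume.restrict (Ioi 0)).withDensity fun t ↦ ENNReal.ofReal (g t)

variable {g : ℝ → ℝ} {a b x : ℝ} {z : ℂ}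

lemma laplaceTransform_ofReal (g : ℝ → ℝ) (x : ℝ) :
    laplaceTransform g x = ((∫ t in Ioi (0 : ℝ), g t * Real.exp (-x * t) : ℝ) : ℂ) := by
  rw [laplaceTransform, ← integral_complex_ofReal]
  push_cast
  rfl

lemma mem_integrableExpSet_posPartMeasure (hg : Measurable g) :
    x ∈ integrableExpSet (fun t ↦ -t) (posPartMeasure g) ↔
      IntegrableOn (fun t ↦ max (g t) 0 * Real.exp (-x * t)) (Ioi 0) := by
  unfold integrableExpSet posPartMeasure IntegrableOn
  rw [mem_ofPred_eq, integrable_withDensity_iff_integrable_smul' (by fun_prop)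
    (.of_forall fun t ↦ ENNReal.ofReal_lt_top)]
  simp [ENNReal.toReal_ofReal']

lemma complexMGF_posPartMeasure (hg : Measurable g) (z : ℂ) :
    complexMGF (fun t ↦ -t) (posPartMeasure g) z =
      laplaceTransform (fun t ↦ max (g t) 0) z := by
  unfold complexMGF posPartMeasure laplaceTransform
  rw [integral_withDensity_eq_integral_toReal_smul (by fun_prop)
    (.of_forall fun t ↦ ENNReal.ofReal_lt_top)]
  simp [ENNReal.toReal_ofReal']

lemma mem_integrableExpSet_posPartMeasure_of_integrableOn (hg : Measurable g)
    (h : IntegrableOn (fun t ↦ g t * Real.exp (-x * t)) (Ioi 0)) :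
    x ∈ integrableExpSet (fun t ↦ -t) (posPartMeasure g) := by
  refine (mem_integrableExpSet_posPartMeasure hg).2 (h.pos_part.congr (.of_forall fun t ↦ ?_))
  simp only [max_mul_of_nonneg _ _ (Real.exp_pos _).le, zero_mul]

lemma integrableOn_neg_mul_exp (h : IntegrableOn (fun t ↦ g t * Real.exp (-x * t)) (Ioi 0)) :
    IntegrableOn (fun t ↦ -g t * Real.exp (-x * t)) (Ioi 0) :=
  h.neg.congr (.of_forall fun _ ↦ (neg_mul _ _).symm)

lemma integrableOn_mul_exp_of_mem_integrableExpSet (hg : Measurable g)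
    (hpos : x ∈ integrableExpSet (fun t ↦ -t) (posPartMeasure g))
    (hneg : x ∈ integrableExpSet (fun t ↦ -t) (posPartMeasure fun t ↦ -g t)) :
    IntegrableOn (fun t ↦ g t * Real.exp (-x * t)) (Ioi 0) := by
  refine (((mem_integrableExpSet_posPartMeasure hg).1 hpos).sub
    ((mem_integrableExpSet_posPartMeasure hg.fun_neg).1 hneg)).congr (.of_forall fun t ↦ ?_)
  simp only [Pi.sub_apply, ← sub_mul, max_zero_sub_max_neg_zero_eq_self]

lemma laplaceTransform_eq_complexMGF_sub (hg : Measurable g)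
    (h : IntegrableOn (fun t ↦ g t * Real.exp (-z.re * t)) (Ioi 0)) :
    laplaceTransform g z = complexMGF (fun t ↦ -t) (posPartMeasure g) z -
      complexMGF (fun t ↦ -t) (posPartMeasure fun t ↦ -g t) z := by
  have hint {f : ℝ → ℝ} (hf : Measurable f)
      (h : IntegrableOn (fun t ↦ f t * Real.exp (-z.re * t)) (Ioi 0)) :
      IntegrableOn (fun t ↦ ((max (f t) 0 : ℝ) : ℂ) * Complex.exp (-z * t)) (Ioi 0) := by
    refine Integrable.mono ((mem_integrableExpSet_posPartMeasure hf).1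
      (mem_integrableExpSet_posPartMeasure_of_integrableOn hf h)) (by fun_prop)
      (.of_forall fun t ↦ ?_)
    simp [Complex.norm_exp]
  rw [complexMGF_posPartMeasure hg, complexMGF_posPartMeasure hg.fun_neg]
  unfold laplaceTransform
  rw [← integral_sub (hint hg h) (hint hg.fun_neg (integrableOn_neg_mul_exp h))]
  simp_rw [← sub_mul, ← Complex.ofReal_sub, max_zero_sub_max_neg_zero_eq_self]

lemma mem_interior_integrableExpSet_posPartMeasure (hg : Measurable g)
    (h : ∀ x, b < x → IntegrableOn (fun t ↦ g t * Real.exp (-x * t)) (Ioi 0)) (hx : b < x) :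
    x ∈ interior (integrableExpSet (fun t ↦ -t) (posPartMeasure g)) :=
  mem_interior.2 ⟨Ioi b, fun y hy ↦
    mem_integrableExpSet_posPartMeasure_of_integrableOn hg (h y hy), isOpen_Ioi, hx⟩

lemma analyticAt_laplaceTransform (hg : Measurable g)
    (h : ∀ x, b < x → IntegrableOn (fun t ↦ g t * Real.exp (-x * t)) (Ioi 0)) (hz : b < z.re) :
    AnalyticAt ℂ (laplaceTransform g) z := by
  have hpos := analyticAt_complexMGF (mem_interior_integrableExpSet_posPartMeasure hg h hz)
  have hneg := analyticAt_complexMGF (mem_interior_integrableExpSet_posPartMeasure hg.fun_neg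
    (fun x hx ↦ integrableOn_neg_mul_exp (h x hx)) hz)
  refine (hpos.sub hneg).congr ?_
  filter_upwards [(isOpen_Ioi.preimage Complex.continuous_re).mem_nhds hz] with w hw
  exact (laplaceTransform_eq_complexMGF_sub hg (h w.re hw)).symm

lemma integrableExpSet_posPartMeasure_eq_univ (hg : Measurable g)
    (h : IntegrableOn (fun t ↦ g t * Real.exp (-x * t)) (Ioi 0)) (hev : ∀ᶠ t in atTop, g t ≤ 0) :
    integrableExpSet (fun t ↦ -t) (posPartMeasure g) = univ := by
  refine eq_univ_of_forall fun y ↦ ?_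
  obtain ⟨T, hT⟩ := eventually_atTop.1 hev
  have hx := (mem_integrableExpSet_posPartMeasure hg).1
    (mem_integrableExpSet_posPartMeasure_of_integrableOn hg h)
  refine (mem_integrableExpSet_posPartMeasure hg).2
    ((hx.const_mul (Real.exp (|x - y| * |T|))).mono' (by fun_prop) ?_)
  filter_upwards [ae_restrict_mem measurableSet_Ioi] with t (ht : 0 < t)
  rw [Real.norm_of_nonneg (by positivity)]
  rcases le_or_gt T t with hTt | htT
  · simp [max_eq_right (hT t hTt)]
  · rw [mul_left_comm, ← Real.exp_add]
    gcongr
    have : (x - y) * t ≤ |x - y| * |T| :=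
      mul_le_mul (le_abs_self _) (htT.le.trans (le_abs_self T)) ht.le (abs_nonneg _)
    linarith

-- Landau's theorem. The negative part of `g` has bounded support, so its transform is entire and
-- the continuation of the transform of `g` yields one of the transform of its positive part.
theorem integrableOn_mul_exp_of_differentiableOn {U : Set ℂ} {H : ℂ → ℂ} (hg : Measurable g)
    (hev : ∀ᶠ t in atTop, 0 ≤ g t)
    (h : ∀ x, a < x → IntegrableOn (fun t ↦ g t * Real.exp (-x * t)) (Ioi 0))
    (hU : IsOpen U) (hbU : ∀ x : ℝ, b < x → (x : ℂ) ∈ U) (hH : DifferentiableOn ℂ H U)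
    (hgH : ∀ x : ℝ, a < x → laplaceTransform g x = H x) (hx : b < x) :
    IntegrableOn (fun t ↦ g t * Real.exp (-x * t)) (Ioi 0) := by
  obtain ⟨c, hac, hbc⟩ : ∃ c, a < c ∧ b < c := (exists_gt (max a b)).imp fun c ↦ max_lt_iff.1
  have huniv : integrableExpSet (fun t ↦ -t) (posPartMeasure fun t ↦ -g t) = univ :=
    integrableExpSet_posPartMeasure_eq_univ hg.fun_neg (integrableOn_neg_mul_exp (h c hac))
      (hev.mono fun t ht ↦ neg_nonpos.2 ht)
  have hneg : Differentiable ℂ (complexMGF (fun t ↦ -t) (posPartMeasure fun t ↦ -g t)) := fun z ↦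
    (analyticAt_complexMGF (by simp [huniv])).differentiableAt
  have hK : DifferentiableOn ℂ
      (fun z ↦ H z + complexMGF (fun t ↦ -t) (posPartMeasure fun t ↦ -g t) z) U :=
    hH.add hneg.differentiableOn
  have hc := mem_interior_integrableExpSet_posPartMeasure hg h hac
  have hpos := subset_interior_integrableExpSet_of_differentiableOn isPreconnected_Ioi hU hbU hK
    hbc hc <| eventuallyEq_of_eventually_ofReal_eq (analyticAt_complexMGF hc)
      (hK.analyticAt (hU.mem_nhds (hbU c hbc))) <| by
      filter_upwards [Ioi_mem_nhds hac] with y hy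
      rw [← hgH y hy, laplaceTransform_eq_complexMGF_sub hg (h y hy), sub_add_cancel]
  exact integrableOn_mul_exp_of_mem_integrableExpSet hg (interior_subset (hpos hx))
    (huniv ▸ mem_univ x)

end LaplaceTransform

section LaplaceIntegrals

open MeasureTheory Topology Set

variable {s : ℝ}

lemma integrableOn_Ioi_and_hasSum_integral_of_hasSum_indicator_Ici {ι : Type*} [Countable ι]
    {l : ι → ℝ} {f : ι → ℝ → ℝ} {F : ℝ → ℝ} {a : ℝ} (hl : ∀ i, a ≤ l i)
    (hf : ∀ i, IntegrableOn (f i) (Ioi (l i)))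
    (hsum : Summable fun i ↦ ∫ t in Ioi (l i), ‖f i t‖)
    (hF : ∀ t, a < t → HasSum (fun i ↦ (Ici (l i)).indicator (f i) t) (F t)) :
    IntegrableOn F (Ioi a) ∧
      HasSum (fun i ↦ ∫ t in Ioi (l i), f i t) (∫ t in Ioi a, F t) := by
  have hrestrict (i : ι) :
      (volume.restrict (Ioi a)).restrict (Ici (l i)) = volume.restrict (Ioi (l i)) := by
    rw [Measure.restrict_comm measurableSet_Ici, ← restrict_Ioi_eq_restrict_Ici,
      Measure.restrict_restrict measurableSet_Ioi, Ioi_inter_Ioi, sup_of_le_right (hl i)]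
  have hint (i : ι) : Integrable ((Ici (l i)).indicator (f i)) (volume.restrict (Ioi a)) := by
    rw [integrable_indicator_iff measurableSet_Ici, IntegrableOn, hrestrict]
    exact hf i
  have hnorm : Summable fun i ↦ ∫ t in Ioi a, ‖(Ici (l i)).indicator (f i) t‖ := by
    refine hsum.congr fun i ↦ ?_
    simp_rw [norm_indicator_eq_indicator_norm]
    rw [integral_indicator measurableSet_Ici, hrestrict]
  have hF' : ∀ᵐ t ∂volume.restrict (Ioi a),
      HasSum (fun i ↦ (Ici (l i)).indicator (f i) t) (F t) :=
    ae_restrict_of_forall_mem measurableSet_Ioi hF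
  refine ⟨integrable_of_hasSum hint hnorm hF', ?_⟩
  rw [← integral_congr_ae (hF'.mono fun t ht ↦ ht.tsum_eq)]
  refine (hasSum_integral_of_summable_integral_norm hint hnorm).congr_fun fun i ↦ ?_
  rw [integral_indicator measurableSet_Ici, hrestrict]

lemma tendsto_affine_mul_exp_neg_mul_atTop (hs : 0 < s) (a b : ℝ) :
    Tendsto (fun t ↦ (a + b * t) * Real.exp (-s * t)) atTop (𝓝 0) := by
  have ha := (isLittleO_pow_exp_pos_mul_atTop 0 hs).tendsto_div_nhds_zero.const_mul a
  have hb := (isLittleO_pow_exp_pos_mul_atTop 1 hs).tendsto_div_nhds_zero.const_mul b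
  rw [mul_zero] at ha hb
  refine (add_zero (0 : ℝ) ▸ ha.add hb).congr fun t ↦ ?_
  rw [neg_mul, Real.exp_neg]
  ring

lemma integrableOn_affine_mul_exp_neg_mul (hs : 0 < s) (a b l : ℝ) :
    IntegrableOn (fun t ↦ (a + b * t) * Real.exp (-s * t)) (Ioi l) := by
  refine integrable_of_isBigO_exp_neg (half_pos hs) (by fun_prop) ?_
  refine ((tendsto_affine_mul_exp_neg_mul_atTop (half_pos hs) a b).isBigO_one ℝ |>.mul
    (Asymptotics.isBigO_refl (fun t ↦ Real.exp (-(s / 2) * t)) atTop)).congr (fun t ↦ ?_)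
    fun t ↦ one_mul _
  rw [mul_assoc, ← Real.exp_add]
  ring_nf

lemma integral_affine_mul_exp_neg_mul (hs : 0 < s) (a b l : ℝ) :
    ∫ t in Ioi l, (a + b * t) * Real.exp (-s * t) =
      ((a + b * l) / s + b / s ^ 2) * Real.exp (-s * l) := by
  let F : ℝ → ℝ := fun t ↦ -((a / s + b / s ^ 2) + b / s * t) * Real.exp (-s * t)
  have hF (t : ℝ) : HasDerivAt F ((a + b * t) * Real.exp (-s * t)) t := by
    have hexp : HasDerivAt (fun t ↦ Real.exp (-s * t)) (Real.exp (-s * t) * (-s)) t := by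
      simpa using ((hasDerivAt_id t).const_mul (-s)).exp
    have haffine : HasDerivAt (fun t ↦ -((a / s + b / s ^ 2) + b / s * t)) (-(b / s)) t := by
      simpa only [mul_one] using (((hasDerivAt_id' t).const_mul (b / s)).const_add _).fun_neg
    refine (haffine.mul hexp).congr_deriv ?_
    field_simp
    ring
  have hlim : Tendsto F atTop (𝓝 0) := by
    refine (neg_zero (G := ℝ) ▸ (tendsto_affine_mul_exp_neg_mul_atTop hs (a / s + b / s ^ 2)
      (b / s)).neg).congr fun t ↦ (neg_mul _ _).symm
  rw [integral_Ioi_of_hasDerivAt_of_tendsto' (fun t _ ↦ hF t)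
    (integrableOn_affine_mul_exp_neg_mul hs a b l) hlim]
  simp only [F]
  ring

lemma integral_mul_log_mul_exp_neg :
    ∫ t in Ioi (0 : ℝ), t * Real.log t * Real.exp (-t) = 1 - Real.eulerMascheroniConstant := by
  have hGamma : Complex.Gamma =ᶠ[𝓝 2] Complex.GammaIntegral := by
    filter_upwards [(isOpen_Ioi.preimage Complex.continuous_re).mem_nhds
      (show (2 : ℂ).re ∈ Ioi 0 by norm_num)] with z hz
    exact Complex.Gamma_eq_integral hz
  have hderiv : HasDerivAt Complex.Gamma (1 - Real.eulerMascheroniConstant) 2 := by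
    convert Complex.hasDerivAt_Gamma_nat 1 using 1 <;> norm_num
    ring
  rw [← Complex.ofReal_inj, ← integral_complex_ofReal]
  push_cast
  rw [← ((Complex.hasDerivAt_GammaIntegral (by norm_num)).congr_of_eventuallyEq hGamma).unique
    hderiv]
  refine setIntegral_congr_fun measurableSet_Ioi fun t _ ↦ ?_
  norm_num
  ring

lemma integrableOn_mul_log_mul_exp_neg :
    IntegrableOn (fun t : ℝ ↦ t * Real.log t * Real.exp (-t)) (Ioi 0) := by
  -- The integral of a non-integrable function would be `0`.
  refine not_imp_comm.1 integral_undef (integral_mul_log_mul_exp_neg.trans_ne ?_)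
  linarith [Real.eulerMascheroniConstant_lt_two_thirds]

lemma mul_log_mul_exp_neg_mul_eq (hs : 0 < s) {t : ℝ} (ht : 0 < t) :
    t * Real.log t * Real.exp (-s * t) = s⁻¹ * (s * t * Real.log (s * t) * Real.exp (-(s * t))) -
      (0 + Real.log s * t) * Real.exp (-s * t) := by
  rw [Real.log_mul hs.ne' ht.ne', neg_mul]
  field_simp
  ring

lemma integrableOn_mul_log_mul_exp_neg_comp_mul_left (hs : 0 < s) : IntegrableOn
    (fun t ↦ s⁻¹ * (s * t * Real.log (s * t) * Real.exp (-(s * t)))) (Ioi 0) := by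
  refine Integrable.const_mul ((integrableOn_Ioi_comp_mul_left_iff
    (fun t ↦ t * Real.log t * Real.exp (-t)) 0 hs).2 ?_) _
  rw [mul_zero]
  exact integrableOn_mul_log_mul_exp_neg

lemma integrableOn_mul_log_mul_exp_neg_mul (hs : 0 < s) :
    IntegrableOn (fun t ↦ t * Real.log t * Real.exp (-s * t)) (Ioi 0) :=
  ((integrableOn_mul_log_mul_exp_neg_comp_mul_left hs).sub
    (integrableOn_affine_mul_exp_neg_mul hs 0 (Real.log s) 0)).congr_fun
    (fun _ ht ↦ (mul_log_mul_exp_neg_mul_eq hs ht).symm) measurableSet_Ioi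

lemma integral_mul_log_mul_exp_neg_mul (hs : 0 < s) :
    ∫ t in Ioi (0 : ℝ), t * Real.log t * Real.exp (-s * t) =
      (1 - Real.eulerMascheroniConstant - Real.log s) / s ^ 2 := by
  rw [setIntegral_congr_fun measurableSet_Ioi fun _ ht ↦ mul_log_mul_exp_neg_mul_eq hs ht,
    integral_sub (integrableOn_mul_log_mul_exp_neg_comp_mul_left hs)
      (integrableOn_affine_mul_exp_neg_mul hs 0 (Real.log s) 0),
    integral_affine_mul_exp_neg_mul hs, integral_const_mul,
    integral_comp_mul_left_Ioi (fun t ↦ t * Real.log t * Real.exp (-t)) 0 hs, mul_zero,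
    integral_mul_log_mul_exp_neg]
  simp only [mul_zero, add_zero, zero_div, zero_add, Real.exp_zero, mul_one, smul_eq_mul]
  ring

end LaplaceIntegrals

section RiemannZeta

open MeasureTheory Set

lemma sub_one_mul_riemannZeta {s : ℂ} (hs : s ≠ 1) :
    (s - 1) * riemannZeta s = riemannZeta₁ s := by
  rw [riemannZeta_eq_inv_sub_mul hs, mul_inv_cancel_left₀ (sub_ne_zero.2 hs)]

lemma hasSum_indicator_log_natFloor_exp (f : ℝ → ℝ) (t : ℝ) :
    HasSum (fun n : ℕ ↦ (Ici (Real.log (n + 1))).indicator f t) (⌊Real.exp t⌋₊ * f t) := by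
  have hmem (n : ℕ) : t ∈ Ici (Real.log (n + 1)) ↔ n ∈ Finset.range ⌊Real.exp t⌋₊ := by
    rw [mem_Ici, Real.log_le_iff_le_exp (by positivity), Finset.mem_range, ← Nat.succ_le_iff,
      Nat.le_floor_iff (Real.exp_nonneg t), Nat.cast_succ]
  have hsum : HasSum (fun n : ℕ ↦ (Ici (Real.log (n + 1))).indicator f t)
      (∑ n ∈ Finset.range ⌊Real.exp t⌋₊, (Ici (Real.log (n + 1))).indicator f t) :=
    hasSum_sum_of_ne_finset_zero fun n hn ↦ indicator_of_notMem (mt (hmem n).1 hn) f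
  rwa [Finset.sum_congr rfl fun n hn ↦ indicator_of_mem ((hmem n).2 hn) f, Finset.sum_const,
    Finset.card_range, nsmul_eq_mul] at hsum

lemma exp_neg_mul_log {x y : ℝ} (hy : 0 < y) : Real.exp (-x * Real.log y) = y ^ (-x) := by
  rw [Real.rpow_def_of_pos hy, mul_comm]

lemma integrableOn_natFloor_exp_and_hasSum_integral {x : ℝ} (hx : 1 < x) :
    IntegrableOn (fun t ↦ ⌊Real.exp t⌋₊ * Real.exp (-x * t)) (Ioi 0) ∧
      HasSum (fun n : ℕ ↦ ((n : ℝ) + 1) ^ (-x) / x)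
        (∫ t in Ioi (0 : ℝ), ⌊Real.exp t⌋₊ * Real.exp (-x * t)) := by
  have hx0 : 0 < x := by linarith
  have hint (n : ℕ) : ∫ t in Ioi (Real.log (n + 1)), Real.exp (-x * t) =
      ((n : ℝ) + 1) ^ (-x) / x := by
    rw [integral_exp_mul_Ioi (neg_neg_of_pos hx0), neg_div_neg_eq,
      exp_neg_mul_log n.cast_add_one_pos]
  have hsum : Summable fun n : ℕ ↦ ((n : ℝ) + 1) ^ (-x) / x := by
    refine Summable.div_const ?_ x
    exact_mod_cast (summable_nat_add_iff 1).2 (Real.summable_nat_rpow.2 (neg_lt_neg hx))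
  simp_rw [← hint]
  refine integrableOn_Ioi_and_hasSum_integral_of_hasSum_indicator_Ici
    (fun n ↦ Real.log_nonneg (le_add_of_nonneg_left n.cast_nonneg))
    (fun n ↦ integrableOn_exp_mul_Ioi (neg_neg_of_pos hx0) _) ?_
    fun t _ ↦ hasSum_indicator_log_natFloor_exp _ t
  simpa only [Real.norm_of_nonneg (Real.exp_nonneg _), hint] using hsum

lemma laplaceTransform_natFloor_exp {x : ℝ} (hx : 1 < x) :
    laplaceTransform (fun t ↦ ⌊Real.exp t⌋₊) x = riemannZeta x / x := by
  rw [laplaceTransform_ofReal,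
    ← (integrableOn_natFloor_exp_and_hasSum_integral hx).2.tsum_eq, tsum_div_const,
    zeta_eq_tsum_one_div_nat_add_one_cpow (by simpa using hx)]
  push_cast
  congr 2 with n
  rw [Complex.ofReal_cpow n.cast_add_one_pos.le, one_div, ← Complex.cpow_neg]
  push_cast
  rfl

lemma integrableOn_fract_exp_mul_exp {x : ℝ} (hx : 0 < x) :
    IntegrableOn (fun t ↦ Int.fract (Real.exp t) * Real.exp (-x * t)) (Ioi 0) := by
  refine (integrableOn_exp_mul_Ioi (neg_neg_of_pos hx) 0).mono' (by fun_prop)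
    (.of_forall fun t ↦ ?_)
  rw [Real.norm_of_nonneg (mul_nonneg (Int.fract_nonneg _) (Real.exp_nonneg _))]
  exact mul_le_of_le_one_left (Real.exp_nonneg _) (Int.fract_lt_one _).le

lemma laplaceTransform_fract_exp {x : ℝ} (hx : 1 < x) :
    laplaceTransform (fun t ↦ Int.fract (Real.exp t)) x = 1 / (x - 1) - riemannZeta x / x := by
  have hfract (t : ℝ) : Int.fract (Real.exp t) * Real.exp (-x * t) =
      Real.exp (-(x - 1) * t) - ⌊Real.exp t⌋₊ * Real.exp (-x * t) := by
    rw [Int.fract, ← natCast_floor_eq_intCast_floor (Real.exp_nonneg t), sub_mul, ← Real.exp_add]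
    ring_nf
  have hneg : -(x - 1) < 0 := by linarith
  rw [← laplaceTransform_natFloor_exp hx, laplaceTransform_ofReal, laplaceTransform_ofReal]
  simp_rw [hfract]
  rw [integral_sub (integrableOn_exp_mul_Ioi hneg 0)
      (integrableOn_natFloor_exp_and_hasSum_integral hx).1,
    integral_exp_mul_Ioi hneg, mul_zero, Real.exp_zero, neg_div_neg_eq]
  push_cast
  rfl

lemma riemannZeta₁_eq_sub_mul_laplaceTransform {s : ℂ} (hs : 0 < s.re) :
    riemannZeta₁ s = s - s * (s - 1) * laplaceTransform (fun t ↦ Int.fract (Real.exp t)) s := by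
  have hL : AnalyticOnNhd ℂ
      (fun s ↦ s - s * (s - 1) * laplaceTransform (fun t ↦ Int.fract (Real.exp t)) s)
      {s | 0 < s.re} := fun z hz ↦ by
    have := analyticAt_laplaceTransform (by fun_prop) (fun _ ↦ integrableOn_fract_exp_mul_exp) hz
    fun_prop
  have htwo : ((2 : ℝ) : ℂ) ∈ {s : ℂ | 0 < s.re} := by simp
  refine AnalyticOnNhd.eqOn_of_preconnected_of_eventuallyEq
    (differentiable_riemannZeta₁.differentiableOn.analyticOnNhd isOpen_univ |>.mono
      (subset_univ _)) hL (convex_halfSpace_re_gt 0).isPreconnected htwo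
    (eventuallyEq_of_eventually_ofReal_eq (differentiable_riemannZeta₁.analyticAt _)
      (hL _ htwo) ?_) hs
  filter_upwards [Ioi_mem_nhds one_lt_two] with x (hx : 1 < x)
  have hx1 : (x : ℂ) - 1 ≠ 0 := sub_ne_zero.2 (by exact_mod_cast hx.ne')
  have hx0 : (x : ℂ) ≠ 0 := by exact_mod_cast (zero_lt_one.trans hx).ne'
  rw [laplaceTransform_fract_exp hx, ← sub_one_mul_riemannZeta (sub_ne_zero.1 hx1)]
  field_simp
  ring

lemma riemannZeta₁_ofReal_mem_slitPlane {x : ℝ} (hx : 0 < x) :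
    riemannZeta₁ x ∈ Complex.slitPlane := by
  let L : ℝ := ∫ t in Ioi (0 : ℝ), Int.fract (Real.exp t) * Real.exp (-x * t)
  have hL0 : 0 ≤ L := integral_nonneg fun t ↦
    mul_nonneg (Int.fract_nonneg _) (Real.exp_nonneg _)
  have hL1 : L * x ≤ 1 := by
    rw [← le_div_iff₀ hx]
    calc L ≤ ∫ t in Ioi (0 : ℝ), Real.exp (-x * t) :=
          integral_mono (integrableOn_fract_exp_mul_exp hx)
            (integrableOn_exp_mul_Ioi (neg_neg_of_pos hx) 0) fun t ↦
              mul_le_of_le_one_left (Real.exp_nonneg _) (Int.fract_lt_one _).le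
      _ = 1 / x := by
          rw [integral_exp_mul_Ioi (neg_neg_of_pos hx), mul_zero, Real.exp_zero, neg_div_neg_eq]
  rw [riemannZeta₁_eq_sub_mul_laplaceTransform (by simpa using hx), laplaceTransform_ofReal]
  have : 0 < x - x * (x - 1) * L := by
    rcases le_total x 1 with h | h
    · nlinarith [mul_nonneg hx.le hL0]
    · nlinarith
  exact_mod_cast Complex.ofReal_mem_slitPlane.2 this

lemma hasSum_neg_log_one_sub_primes_cpow {x : ℝ} (hx : 1 < x) :
    HasSum (fun p : Nat.Primes ↦ -Complex.log (1 - (p : ℂ) ^ (-x : ℂ)))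
      (Complex.log (riemannZeta x)) := by
  have hsum : Summable fun p : Nat.Primes ↦ -Complex.log (1 - (p : ℂ) ^ (-x : ℂ)) := by
    refine (Summable.of_norm ?_).clog_one_sub.neg
    refine (Nat.Primes.summable_rpow.2 (neg_lt_neg hx)).congr fun p ↦ ?_
    rw [Complex.norm_natCast_cpow_of_pos p.2.pos, ← Complex.ofReal_neg, Complex.ofReal_re]
  have hreal (p : Nat.Primes) : -Complex.log (1 - (p : ℂ) ^ (-x : ℂ)) =
      ((-Real.log (1 - (p : ℝ) ^ (-x)) : ℝ) : ℂ) := by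
    have : (p : ℝ) ^ (-x) ≤ 1 :=
      Real.rpow_le_one_of_one_le_of_nonpos (mod_cast p.2.one_le) (by linarith)
    push_cast [Complex.ofReal_log (sub_nonneg.2 this),
      Complex.ofReal_cpow (Nat.cast_nonneg (p : ℕ))]
    rfl
  rw [← riemannZeta_eulerProduct_exp_log (by simpa using hx), Complex.log_exp]
  · exact hsum.hasSum
  all_goals
    simp_rw [hreal, ← Complex.ofReal_tsum, Complex.ofReal_im]
    linarith [Real.pi_pos]

lemma log_riemannZeta₁_ofReal_add_one {x : ℝ} (hx : 0 < x) :
    Complex.log (riemannZeta₁ (x + 1)) = Real.log x + Complex.log (riemannZeta (x + 1)) := by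
  have hx1 : (x : ℂ) + 1 ≠ 1 := by simpa using hx.ne'
  rw [← sub_one_mul_riemannZeta hx1, add_sub_cancel_right, Complex.log_ofReal_mul hx]
  exact riemannZeta_ne_zero_of_one_le_re (by simp [hx.le])

lemma riemannHypothesis_of_riemannZeta₁_ne_zero
    (h : ∀ s : ℂ, 1 / 2 < s.re → riemannZeta₁ s ≠ 0) : RiemannHypothesis := by
  intro s hs htriv hs1
  have hre {z : ℂ} (hz1 : z ≠ 1) (hz : riemannZeta z = 0) : z.re ≤ 1 / 2 := by
    by_contra! hlt
    exact h z hlt (by rw [← sub_one_mul_riemannZeta hz1, hz, mul_zero])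
  have hs0 : s ≠ 0 := by
    rintro rfl
    norm_num [riemannZeta_zero] at hs
  have hGamma : Complex.Gammaℝ s ≠ 0 := by
    rw [Ne, Complex.Gammaℝ_eq_zero_iff]
    rintro ⟨_ | n, hn⟩
    · exact hs0 (by simpa using hn)
    · exact htriv ⟨n, by rw [hn]; push_cast; ring⟩
  have hcompleted : completedRiemannZeta s = 0 := by
    rw [riemannZeta_def_of_ne_zero hs0] at hs
    exact (div_eq_zero_iff.1 hs).resolve_right hGamma
  have hreflect : riemannZeta (1 - s) = 0 := by
    rw [riemannZeta_def_of_ne_zero (sub_ne_zero.2 hs1.symm), completedRiemannZeta_one_sub,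
      hcompleted, zero_div]
  have hle := hre (z := 1 - s) (by simpa using hs0) hreflect
  rw [Complex.sub_re, Complex.one_re] at hle
  linarith [hre hs1 hs]

end RiemannZeta

section PrimeRemainder

/-- The contribution of the prime `p` to `s² ĝ(s) + log (s ζ(s + 1))`, where `ĝ` is the Laplace
transform of `gammaMajorant`: the first summand comes from the jump of `gammaMajorant` at `log p`,
the second one from the Euler factor at `p`. -/
noncomputable def primeRemainderTerm (p : ℕ) (s : ℂ) : ℂ :=
  (s * (Real.log p / ((p : ℝ) - 1) : ℝ) + Real.log (1 - 1 / p) * (1 + s * Real.log p)) *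
    (p : ℂ) ^ (-s) - Complex.log (1 - (p : ℂ) ^ (-(s + 1)))

/-- The sum over the primes of `primeRemainderTerm`; it converges for `-1 / 2 < re s`. -/
noncomputable def primeRemainder (s : ℂ) : ℂ := ∑' p : Nat.Primes, primeRemainderTerm p s

variable {p : ℕ} {s : ℂ}

lemma norm_log_one_sub_add_self_le {w : ℂ} (hw : ‖w‖ ≤ 3 / 4) :
    ‖Complex.log (1 - w) + w‖ ≤ 2 * ‖w‖ ^ 2 := by
  have hlog := Complex.norm_log_one_add_sub_self_le (z := -w) (by rw [norm_neg]; linarith)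
  rw [norm_neg, sub_neg_eq_add, ← sub_eq_add_neg] at hlog
  have hinv : (1 - ‖w‖)⁻¹ ≤ 4 := by
    rw [inv_le_comm₀ (by linarith) (by norm_num)]
    linarith
  nlinarith [sq_nonneg ‖w‖]

lemma neg_one_div_sub_one_le_log_one_sub_one_div {x : ℝ} (hx : 1 < x) :
    -(1 / (x - 1)) ≤ Real.log (1 - 1 / x) := by
  have h : 1 - 1 / x = (x - 1) / x := by field_simp
  refine le_of_eq_of_le ?_
    (Real.one_sub_inv_le_log_of_pos (h ▸ div_pos (sub_pos.2 hx) (by linarith)))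
  have : x - 1 ≠ 0 := (sub_pos.2 hx).ne'
  rw [h, inv_div]
  field_simp
  ring

lemma log_one_sub_one_div_le {x : ℝ} (hx : 1 < x) : Real.log (1 - 1 / x) ≤ -(1 / x) := by
  have h : 1 / x < 1 := (div_lt_one (by linarith)).2 hx
  linarith [Real.log_le_sub_one_of_pos (sub_pos.2 h)]

lemma one_div_sub_one_sub_one_div_le {x : ℝ} (hx : 2 ≤ x) :
    1 / (x - 1) - 1 / x ≤ 2 / x ^ 2 := by
  have hx1 : 0 < x - 1 := by linarith
  rw [div_sub_div _ _ hx1.ne' (by linarith), div_le_div_iff₀ (by positivity) (by positivity)]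
  nlinarith

lemma abs_one_div_add_log_one_sub_one_div_le {x : ℝ} (hx : 2 ≤ x) :
    |1 / x + Real.log (1 - 1 / x)| ≤ 2 / x ^ 2 := by
  have hlower := neg_one_div_sub_one_le_log_one_sub_one_div (x := x) (by linarith)
  rw [abs_of_nonpos (by linarith [log_one_sub_one_div_le (x := x) (by linarith)])]
  linarith [one_div_sub_one_sub_one_div_le hx]

lemma abs_one_div_sub_one_add_log_one_sub_one_div_le {x : ℝ} (hx : 2 ≤ x) :
    |1 / (x - 1) + Real.log (1 - 1 / x)| ≤ 2 / x ^ 2 := by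
  have hupper := log_one_sub_one_div_le (x := x) (by linarith)
  rw [abs_of_nonneg
    (by linarith [neg_one_div_sub_one_le_log_one_sub_one_div (x := x) (by linarith)])]
  linarith [one_div_sub_one_sub_one_div_le hx]

lemma norm_natCast_cpow_neg_add_one_le (hp : 2 ≤ p) (hs : -(1 / 2) ≤ s.re) :
    ‖(p : ℂ) ^ (-(s + 1))‖ ≤ 3 / 4 := by
  have hp' : (2 : ℝ) ≤ p := mod_cast hp
  have hre : (-(s + 1)).re ≤ -(1 / 2) := by
    rw [Complex.neg_re, Complex.add_re, Complex.one_re]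
    linarith
  rw [Complex.norm_natCast_cpow_of_pos (by lia)]
  calc (p : ℝ) ^ (-(s + 1)).re ≤ (p : ℝ) ^ (-(1 / 2) : ℝ) :=
        Real.rpow_le_rpow_of_exponent_le (by linarith) hre
    _ ≤ (2 : ℝ) ^ (-(1 / 2) : ℝ) := Real.rpow_le_rpow_of_nonpos two_pos hp' (by norm_num)
    _ ≤ 3 / 4 := by
      rw [Real.rpow_neg zero_le_two, ← Real.sqrt_eq_rpow,
        inv_le_comm₀ (by positivity) (by norm_num)]
      exact Real.le_sqrt_of_sq_le (by norm_num)

lemma one_sub_natCast_cpow_mem_slitPlane (hp : 2 ≤ p) (hs : -(1 / 2) ≤ s.re) :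
    1 - (p : ℂ) ^ (-(s + 1)) ∈ Complex.slitPlane := by
  refine Complex.mem_slitPlane_of_norm_lt_one (z := -(p : ℂ) ^ (-(s + 1))) ?_
  rw [norm_neg]
  linarith [norm_natCast_cpow_neg_add_one_le hp hs]

lemma natCast_cpow_neg_add_one (hp : p ≠ 0) :
    (p : ℂ) ^ (-(s + 1)) = (p : ℂ) ^ (-s) / p := by
  rw [neg_add', Complex.cpow_sub _ _ (Nat.cast_ne_zero.2 hp), Complex.cpow_one]

-- The terms of order `1 / p` cancel within each of the three summands.
lemma primeRemainderTerm_eq (hp : p ≠ 0) (s : ℂ) : primeRemainderTerm p s =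
    s * ((Real.log p * (1 / ((p : ℝ) - 1) + Real.log (1 - 1 / p)) : ℝ) : ℂ) * (p : ℂ) ^ (-s) +
      ((1 / p + Real.log (1 - 1 / p) : ℝ) : ℂ) * (p : ℂ) ^ (-s) -
      (Complex.log (1 - (p : ℂ) ^ (-(s + 1))) + (p : ℂ) ^ (-(s + 1))) := by
  rw [primeRemainderTerm]
  nth_rw 3 [natCast_cpow_neg_add_one hp]
  push_cast
  ring

lemma norm_primeRemainderTerm_le {b K : ℝ} (hp : 2 ≤ p) (hb : -(1 / 2) ≤ b) (hb0 : b < 0)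
    (hs : b ≤ s.re) (hK : ‖s‖ ≤ K) :
    ‖primeRemainderTerm p s‖ ≤ (2 * K / (-b) + 4) * (p : ℝ) ^ (-2 - 2 * b) := by
  have hp2 : (2 : ℝ) ≤ p := mod_cast hp
  set q := (p : ℝ) ^ (-b) with hq
  have hq1 : 1 ≤ q := Real.one_le_rpow (by linarith) (by linarith)
  have hlog : |Real.log p| ≤ q / (-b) := by
    rw [abs_of_nonneg (Real.log_nonneg (by linarith))]
    exact Real.log_le_rpow_div (by linarith) (neg_pos.2 hb0)
  have hpow : ‖(p : ℂ) ^ (-s)‖ ≤ q := by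
    rw [Complex.norm_natCast_cpow_of_pos (by lia)]
    exact Real.rpow_le_rpow_of_exponent_le (by linarith) (by rw [Complex.neg_re]; linarith)
  have hpow' : ‖(p : ℂ) ^ (-(s + 1))‖ ≤ q / p := by
    rw [natCast_cpow_neg_add_one (by lia), norm_div, Complex.norm_natCast]
    gcongr
  have heuler : ‖Complex.log (1 - (p : ℂ) ^ (-(s + 1))) + (p : ℂ) ^ (-(s + 1))‖ ≤
      2 * (q / p) ^ 2 :=
    (norm_log_one_sub_add_self_le (norm_natCast_cpow_neg_add_one_le hp (hb.trans hs))).trans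
      (by gcongr)
  have hexp : (p : ℝ) ^ (-2 - 2 * b) = q ^ 2 / p ^ 2 := by
    rw [hq, ← Real.rpow_mul_natCast (by linarith), ← Real.rpow_natCast (p : ℝ) 2,
      ← Real.rpow_sub (by linarith)]
    push_cast
    ring_nf
  have hK0 : 0 ≤ K := (norm_nonneg s).trans hK
  have hb' : 0 < -b := neg_pos.2 hb0
  rw [primeRemainderTerm_eq (by lia)]
  refine (norm_sub_le_of_le (norm_add_le _ _) heuler).trans ?_
  simp only [norm_mul, Complex.norm_real, Real.norm_eq_abs]
  calc _ ≤ K * (q / (-b) * (2 / p ^ 2)) * q + 2 / p ^ 2 * (q * q) + 2 * (q / p) ^ 2 := by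
        gcongr
        · exact abs_one_div_sub_one_add_log_one_sub_one_div_le hp2
        · exact abs_one_div_add_log_one_sub_one_div_le hp2
        · exact hpow.trans (le_mul_of_one_le_left (by linarith) hq1)
    _ = _ := by
      rw [hexp]
      ring

lemma exists_summable_norm_primeRemainderTerm_le (hs : -(1 / 2) < s.re) :
    ∃ U : Set ℂ, ∃ u : Nat.Primes → ℝ, IsOpen U ∧ s ∈ U ∧ (∀ z ∈ U, -(1 / 2) < z.re) ∧
      Summable u ∧ ∀ p : Nat.Primes, ∀ z ∈ U, ‖primeRemainderTerm p z‖ ≤ u p := by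
  obtain ⟨b, hb, hb_lt⟩ := exists_between (lt_min (show -(1 / 2) < (0 : ℝ) by norm_num) hs)
  obtain ⟨hb0, hbs⟩ := lt_min_iff.1 hb_lt
  refine ⟨{z | b < z.re} ∩ {z | ‖z‖ < ‖s‖ + 1}, _,
    (isOpen_Ioi.preimage Complex.continuous_re).inter (isOpen_Iio.preimage continuous_norm),
    ⟨hbs, lt_add_one ‖s‖⟩, fun z hz ↦ hb.trans hz.1,
    (Nat.Primes.summable_rpow.2 (show -2 - 2 * b < -1 by linarith)).mul_left _,
    fun p z hz ↦ norm_primeRemainderTerm_le p.2.two_le hb.le hb0 hz.1.le (le_of_lt hz.2)⟩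

lemma summable_primeRemainderTerm (hs : -(1 / 2) < s.re) :
    Summable fun p : Nat.Primes ↦ primeRemainderTerm p s := by
  obtain ⟨U, u, -, hsU, -, hu, hle⟩ := exists_summable_norm_primeRemainderTerm_le hs
  exact .of_norm_bounded hu fun p ↦ hle p s hsU

lemma differentiableAt_primeRemainderTerm (hp : 2 ≤ p) (hs : -(1 / 2) ≤ s.re) :
    DifferentiableAt ℂ (primeRemainderTerm p) s := by
  have : NeZero (p : ℂ) := ⟨Nat.cast_ne_zero.2 (by lia)⟩
  have := one_sub_natCast_cpow_mem_slitPlane hp hs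
  unfold primeRemainderTerm
  fun_prop (disch := assumption)

lemma differentiableAt_primeRemainder (hs : -(1 / 2) < s.re) :
    DifferentiableAt ℂ primeRemainder s := by
  obtain ⟨U, u, hU, hsU, hre, hu, hle⟩ := exists_summable_norm_primeRemainderTerm_le hs
  exact (Complex.differentiableOn_tsum_of_summable_norm hu
    (fun p z hz ↦ (differentiableAt_primeRemainderTerm p.2.two_le
      (hre z hz).le).differentiableWithinAt) hU hle).differentiableAt (hU.mem_nhds hsU)

lemma primeRemainderTerm_zero (hp : 2 ≤ p) : primeRemainderTerm p 0 = 0 := by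
  have hp1 : 1 / (p : ℝ) ≤ 1 := (div_le_one (by positivity)).2 (mod_cast (by lia))
  rw [primeRemainderTerm, Complex.ofReal_log (sub_nonneg.2 hp1)]
  simp [Complex.cpow_neg_one]

lemma hasDerivAt_primeRemainderTerm_zero (hp : 2 ≤ p) :
    HasDerivAt (primeRemainderTerm p) 0 0 := by
  have hp0 : (p : ℂ) ≠ 0 := Nat.cast_ne_zero.2 (by lia)
  have hp1 : (p : ℂ) - 1 ≠ 0 := sub_ne_zero.2 (mod_cast (by lia))
  have hslit := one_sub_natCast_cpow_mem_slitPlane hp (s := 0) (by norm_num)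
  have hlinear : HasDerivAt (fun s : ℂ ↦ s * (Real.log p / ((p : ℝ) - 1) : ℝ) +
      Real.log (1 - 1 / p) * (1 + s * Real.log p))
      ((Real.log p / ((p : ℝ) - 1) : ℝ) + Real.log (1 - 1 / p) * Real.log p) 0 := by
    simpa only [one_mul] using ((hasDerivAt_id' (0 : ℂ)).mul_const _).fun_add
      (((hasDerivAt_id' (0 : ℂ)).mul_const _).const_add 1 |>.const_mul _)
  have hpow := (hasDerivAt_neg (0 : ℂ)).const_cpow (c := (p : ℂ)) (.inl hp0)
  have hpow_add_one :=
    ((hasDerivAt_id' (0 : ℂ)).add_const 1).fun_neg.const_cpow (c := (p : ℂ)) (.inl hp0)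
  refine ((hlinear.mul hpow).sub ((hpow_add_one.const_sub 1).clog hslit)).congr_deriv ?_
  simp only [zero_add, zero_mul, neg_zero, Complex.cpow_zero, Complex.cpow_neg_one,
    Complex.natCast_log, Complex.ofReal_div, Complex.ofReal_sub, Complex.ofReal_natCast,
    Complex.ofReal_one]
  rw [show 1 - (p : ℂ)⁻¹ = (p - 1) / p by field_simp]
  field_simp
  ring

lemma primeRemainder_zero : primeRemainder 0 = 0 := by
  simp_rw [primeRemainder, fun p : Nat.Primes ↦ primeRemainderTerm_zero p.2.two_le, tsum_zero]

lemma hasDerivAt_primeRemainder_zero : HasDerivAt primeRemainder 0 0 := by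
  have h0 : -(1 / 2) < (0 : ℂ).re := by norm_num
  obtain ⟨U, u, hU, h0U, hre, hu, hle⟩ := exists_summable_norm_primeRemainderTerm_le h0
  have hsum := Complex.hasSum_deriv_of_summable_norm hu
    (fun p z hz ↦ (differentiableAt_primeRemainderTerm p.2.two_le
      (hre z hz).le).differentiableWithinAt) hU hle h0U
  simp_rw [fun p : Nat.Primes ↦ (hasDerivAt_primeRemainderTerm_zero p.2.two_le).deriv] at hsum
  exact (differentiableAt_primeRemainder h0).hasDerivAt.congr_deriv (hsum.unique hasSum_zero)

end PrimeRemainder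

section GeneralizedEulerConstant

lemma log_div_sub_one_nonneg {x : ℝ} (hx : 1 ≤ x) : 0 ≤ Real.log x / (x - 1) :=
  div_nonneg (Real.log_nonneg hx) (sub_nonneg.2 hx)

lemma one_sub_one_div_nonneg {x : ℝ} (hx : 1 ≤ x) : 0 ≤ 1 - 1 / x :=
  sub_nonneg.2 (div_le_one_of_le₀ hx (by linarith))

lemma gammaP_nonneg {P : Finset ℕ} (hP : ∀ p ∈ P, 1 ≤ p) : 0 ≤ gammaP P := by
  have hP' : ∀ p ∈ P, (1 : ℝ) ≤ p := fun p hp ↦ mod_cast hP p hp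
  refine mul_nonneg (Finset.prod_nonneg fun p hp ↦ one_sub_one_div_nonneg (hP' p hp))
    (add_nonneg ?_ (Finset.sum_nonneg fun p hp ↦ log_div_sub_one_nonneg (hP' p hp)))
  linarith [Real.one_half_lt_eulerMascheroniConstant]

lemma gammaR_nonneg (r : ℕ) : 0 ≤ gammaR r := by
  refine gammaP_nonneg fun p hp ↦ ?_
  obtain ⟨k, -, rfl⟩ := Finset.mem_image.1 hp
  exact (Nat.prime_nth_prime k).one_le

lemma gammaP_primesLE (n : ℕ) : gammaP (Nat.primesLE n) = gammaR (Nat.primeCounting n) := by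
  rw [gammaR]
  congr 1
  ext p
  simp only [Nat.mem_primesLE, Finset.mem_image, Finset.mem_range]
  constructor
  · rintro ⟨hpn, hp⟩
    exact ⟨Nat.count Nat.Prime p, Nat.count_strict_mono hp (Nat.lt_succ_of_le hpn),
      Nat.nth_count hp⟩
  · rintro ⟨k, hk, rfl⟩
    exact ⟨Nat.le_of_lt_succ (Nat.nth_lt_of_lt_count hk), Nat.prime_nth_prime k⟩

-- The tangent line of `log` at `t`, applied to the second factor of `gammaP P`.
lemma mul_log_exp_mul_gammaP_le {P : Finset ℕ} (hP : ∀ p ∈ P, 1 < p) {t : ℝ} (ht : 0 < t) :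
    t * Real.log (Real.exp Real.eulerMascheroniConstant * gammaP P) ≤
      Real.eulerMascheroniConstant - t + t * (Real.log t + Real.eulerMascheroniConstant) +
        ∑ p ∈ P, (Real.log p / ((p : ℝ) - 1) + Real.log (1 - 1 / p) * t) := by
  have hP' : ∀ p ∈ P, (1 : ℝ) < p := fun p hp ↦ mod_cast hP p hp
  set A := Real.eulerMascheroniConstant + ∑ p ∈ P, Real.log p / ((p : ℝ) - 1) with hA
  have hA0 : 0 < A := by
    refine add_pos_of_pos_of_nonneg ?_
      (Finset.sum_nonneg fun p hp ↦ log_div_sub_one_nonneg (hP' p hp).le)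
    linarith [Real.one_half_lt_eulerMascheroniConstant]
  have hfactor : ∀ p ∈ P, 1 - 1 / (p : ℝ) ≠ 0 := fun p hp ↦
    (sub_pos.2 ((div_lt_one (zero_lt_one.trans (hP' p hp))).2 (hP' p hp))).ne'
  have hprod : ∏ p ∈ P, (1 - 1 / (p : ℝ)) ≠ 0 := Finset.prod_ne_zero_iff.2 hfactor
  have htangent : Real.log A - Real.log t ≤ A / t - 1 := by
    rw [← Real.log_div hA0.ne' ht.ne']
    exact Real.log_le_sub_one_of_pos (div_pos hA0 ht)
  rw [gammaP, ← hA, Real.log_mul (Real.exp_ne_zero _) (mul_ne_zero hprod hA0.ne'), Real.log_exp,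
    Real.log_mul hprod hA0.ne', Real.log_prod hfactor, Finset.sum_add_distrib, ← Finset.sum_mul]
  calc _ = t * (Real.eulerMascheroniConstant + ∑ p ∈ P, Real.log (1 - 1 / (p : ℝ)) + Real.log t +
        (Real.log A - Real.log t)) := by ring
    _ ≤ t * (Real.eulerMascheroniConstant + ∑ p ∈ P, Real.log (1 - 1 / (p : ℝ)) + Real.log t +
        (A / t - 1)) := by gcongr
    _ = _ := by
      rw [hA]
      field_simp
      ring

end GeneralizedEulerConstant

section GammaMajorant

open MeasureTheory Set

/-- A tangent-line majorant of `t ↦ t * log (e ^ γ * γ(P))`, where `P` consists of the primes up to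
`e ^ t`. Unlike that function it is affine in the sums over `P`, so that its Laplace transform can
be computed. -/
noncomputable def gammaMajorant (t : ℝ) : ℝ :=
  Real.eulerMascheroniConstant - t + t * (Real.log t + Real.eulerMascheroniConstant) +
    ∑ p ∈ Nat.primesLE ⌊Real.exp t⌋₊,
      (Real.log p / ((p : ℝ) - 1) + Real.log (1 - 1 / p) * t)

lemma gammaMajorant_nonneg {t : ℝ} (ht : 0 < t)
    (h : Real.exp (-Real.eulerMascheroniConstant) ≤ gammaP (Nat.primesLE ⌊Real.exp t⌋₊)) :
    0 ≤ gammaMajorant t := by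
  refine le_trans (mul_nonneg ht.le (Real.log_nonneg ?_))
    (mul_log_exp_mul_gammaP_le (fun p hp ↦ (Nat.prime_of_mem_primesLE hp).one_lt) ht)
  rwa [← div_le_iff₀' (Real.exp_pos _), one_div, ← Real.exp_neg]

lemma eventually_gammaMajorant_nonneg
    (h : {r : ℕ | gammaR r < Real.exp (-Real.eulerMascheroniConstant)}.Finite) :
    ∀ᶠ t in atTop, 0 ≤ gammaMajorant t := by
  have hgammaR : ∀ᶠ r in atTop, Real.exp (-Real.eulerMascheroniConstant) ≤ gammaR r := by
    rw [← Nat.cofinite_eq_atTop]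
    exact h.eventually_cofinite_notMem.mono fun r hr ↦ not_lt.1 hr
  have htendsto : Tendsto (fun t ↦ Nat.primeCounting ⌊Real.exp t⌋₊) atTop atTop :=
    Nat.tendsto_primeCounting.comp (tendsto_nat_floor_atTop.comp Real.tendsto_exp_atTop)
  filter_upwards [htendsto.eventually hgammaR, eventually_gt_atTop 0] with t ht ht0
  exact gammaMajorant_nonneg ht0 (by rwa [gammaP_primesLE])

lemma measurable_gammaMajorant : Measurable gammaMajorant := by
  have hsum (c : ℕ → ℝ) : Measurable fun t ↦ ∑ p ∈ Nat.primesLE ⌊Real.exp t⌋₊, c p :=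
    (measurable_from_top (f := fun n : ℕ ↦ ∑ p ∈ Nat.primesLE n, c p)).comp
      (Nat.measurable_floor.comp Real.measurable_exp)
  unfold gammaMajorant
  simp only [Finset.sum_add_distrib, ← Finset.sum_mul]
  have := hsum fun p ↦ Real.log p / ((p : ℝ) - 1)
  have := hsum fun p ↦ Real.log (1 - 1 / p)
  fun_prop

lemma hasSum_indicator_log_primes (f : ℕ → ℝ → ℝ) (t : ℝ) :
    HasSum (fun p : Nat.Primes ↦ (Ici (Real.log p)).indicator (f p) t)
      (∑ p ∈ Nat.primesLE ⌊Real.exp t⌋₊, f p t) := by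
  have hmem (p : Nat.Primes) : t ∈ Ici (Real.log p) ↔ (p : ℕ) ∈ Nat.primesLE ⌊Real.exp t⌋₊ := by
    rw [mem_Ici, Real.log_le_iff_le_exp (mod_cast p.2.pos), Nat.mem_primesLE,
      Nat.le_floor_iff (Real.exp_nonneg t), and_iff_left p.2]
  have hsum : HasSum (fun p : Nat.Primes ↦ (Ici (Real.log p)).indicator (f p) t)
      (∑ p ∈ (Nat.primesLE ⌊Real.exp t⌋₊).subtype Nat.Prime,
        (Ici (Real.log p)).indicator (f p) t) :=
    hasSum_sum_of_ne_finset_zero fun p hp ↦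
      indicator_of_notMem (mt (hmem p).1 (mt Finset.mem_subtype.2 hp)) (f p)
  convert hsum using 1
  rw [← Finset.sum_subtype_of_mem (fun p ↦ f p t) fun p ↦ Nat.prime_of_mem_primesLE]
  exact Finset.sum_congr rfl fun p hp ↦
    (indicator_of_mem ((hmem p).2 (Finset.mem_subtype.1 hp)) (f p)).symm

lemma norm_log_div_add_log_mul_le {y t : ℝ} (hy : 2 ≤ y) (ht : 0 ≤ t) :
    ‖Real.log y / (y - 1) + Real.log (1 - 1 / y) * t‖ ≤ 1 + 1 * t := by
  have hdiv : 1 / (y - 1) ≤ 1 := (div_le_one (by linarith)).2 (by linarith)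
  have hlog : ‖Real.log (1 - 1 / y)‖ ≤ 1 :=
    abs_le.2 ⟨by linarith [neg_one_div_sub_one_le_log_one_sub_one_div (x := y) (by linarith)],
      Real.log_nonpos (one_sub_one_div_nonneg (by linarith)) (by simp; linarith) |>.trans
        zero_le_one⟩
  refine norm_add_le_of_le ?_ ?_
  · rw [Real.norm_of_nonneg (log_div_sub_one_nonneg (by linarith))]
    exact div_le_one_of_le₀ (Real.log_le_sub_one_of_pos (by linarith)) (by linarith)
  · rw [norm_mul, Real.norm_of_nonneg ht]
    gcongr

lemma summable_integral_norm_affine_mul_exp {x : ℝ} (hx : 2 < x) :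
    Summable fun p : Nat.Primes ↦ ∫ t in Ioi (Real.log p),
      ‖(Real.log p / ((p : ℝ) - 1) + Real.log (1 - 1 / p) * t) * Real.exp (-x * t)‖ := by
  have hx0 : 0 < x := by linarith
  refine .of_nonneg_of_le (fun p ↦ integral_nonneg fun t ↦ norm_nonneg _) (fun p ↦ ?_)
    ((Nat.Primes.summable_rpow.2 (show 1 - x < -1 by linarith)).mul_left 2)
  have hp : (2 : ℝ) ≤ p := mod_cast p.2.two_le
  have hlog : 1 + 1 * Real.log p ≤ p := by
    linarith [Real.log_le_sub_one_of_pos (x := p) (by linarith)]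
  calc _ ≤ ∫ t in Ioi (Real.log p), (1 + 1 * t) * Real.exp (-x * t) := by
        refine setIntegral_mono_on (integrableOn_affine_mul_exp_neg_mul hx0 _ _ _).norm
          (integrableOn_affine_mul_exp_neg_mul hx0 _ _ _) measurableSet_Ioi fun t ht ↦ ?_
        rw [norm_mul, Real.norm_of_nonneg (Real.exp_nonneg _)]
        gcongr
        exact norm_log_div_add_log_mul_le hp ((Real.log_nonneg (by linarith)).trans (le_of_lt ht))
    _ = ((1 + 1 * Real.log p) / x + 1 / x ^ 2) * (p : ℝ) ^ (-x) := by
        rw [integral_affine_mul_exp_neg_mul hx0, exp_neg_mul_log (by linarith)]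
    _ ≤ (p + p) * (p : ℝ) ^ (-x) := by
        gcongr
        · exact (div_le_self (by linarith [Real.log_nonneg (x := p) (by linarith)])
            (by linarith)).trans hlog
        · exact (div_le_one_of_le₀ (by nlinarith) (by positivity)).trans (by linarith)
    _ = 2 * (p : ℝ) ^ (1 - x) := by
        rw [sub_eq_add_neg, Real.rpow_add (by linarith), Real.rpow_one]
        ring

lemma integrableOn_sum_primesLE_and_hasSum {x : ℝ} (hx : 2 < x) :
    IntegrableOn (fun t ↦ (∑ p ∈ Nat.primesLE ⌊Real.exp t⌋₊,
      (Real.log p / ((p : ℝ) - 1) + Real.log (1 - 1 / p) * t)) * Real.exp (-x * t)) (Ioi 0) ∧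
    HasSum (fun p : Nat.Primes ↦ ((Real.log p / ((p : ℝ) - 1) + Real.log (1 - 1 / p) * Real.log p)
        / x + Real.log (1 - 1 / p) / x ^ 2) * (p : ℝ) ^ (-x))
      (∫ t in Ioi 0, (∑ p ∈ Nat.primesLE ⌊Real.exp t⌋₊,
        (Real.log p / ((p : ℝ) - 1) + Real.log (1 - 1 / p) * t)) * Real.exp (-x * t)) := by
  have hx0 : 0 < x := by linarith
  simp_rw [Finset.sum_mul]
  have h := integrableOn_Ioi_and_hasSum_integral_of_hasSum_indicator_Ici
    (fun p : Nat.Primes ↦ Real.log_nonneg (x := p) (mod_cast p.2.one_le))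
    (fun p ↦ integrableOn_affine_mul_exp_neg_mul hx0 _ _ _)
    (summable_integral_norm_affine_mul_exp hx)
    fun t _ ↦ hasSum_indicator_log_primes (fun p t ↦
      (Real.log p / ((p : ℝ) - 1) + Real.log (1 - 1 / p) * t) * Real.exp (-x * t)) t
  refine h.imp_right fun h ↦ h.congr_fun fun p ↦ ?_
  rw [integral_affine_mul_exp_neg_mul hx0, exp_neg_mul_log (mod_cast p.2.pos)]

lemma sq_mul_integral_sum_primesLE {x : ℝ} (hx : 2 < x) :
    (x : ℂ) ^ 2 * (∫ t in Ioi 0, (∑ p ∈ Nat.primesLE ⌊Real.exp t⌋₊,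
      (Real.log p / ((p : ℝ) - 1) + Real.log (1 - 1 / p) * t)) * Real.exp (-x * t) : ℝ) =
      primeRemainder x - Complex.log (riemannZeta (x + 1)) := by
  have hx0 : (x : ℂ) ≠ 0 := mod_cast (by linarith : x ≠ 0)
  have hzeta := hasSum_neg_log_one_sub_primes_cpow (show 1 < x + 1 by linarith)
  rw [Complex.ofReal_add, Complex.ofReal_one] at hzeta
  have hremainder : HasSum (fun p : Nat.Primes ↦ primeRemainderTerm p x) (primeRemainder x) :=
    (summable_primeRemainderTerm (by rw [Complex.ofReal_re]; linarith)).hasSum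
  refine (((Complex.hasSum_ofReal.2 (integrableOn_sum_primesLE_and_hasSum hx).2).mul_left
    ((x : ℂ) ^ 2)).congr_fun fun p ↦ ?_).unique (hremainder.sub hzeta)
  rw [primeRemainderTerm]
  push_cast [Complex.ofReal_cpow (Nat.cast_nonneg (p : ℕ))]
  field_simp
  ring

lemma integrableOn_and_sq_mul_integral_elementary {x : ℝ} (hx : 0 < x) :
    IntegrableOn (fun t ↦ (Real.eulerMascheroniConstant - t +
      t * (Real.log t + Real.eulerMascheroniConstant)) * Real.exp (-x * t)) (Ioi 0) ∧
    x ^ 2 * ∫ t in Ioi 0, (Real.eulerMascheroniConstant - t +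
        t * (Real.log t + Real.eulerMascheroniConstant)) * Real.exp (-x * t) =
      Real.eulerMascheroniConstant * x - Real.log x := by
  have hsplit : (fun t ↦ (Real.eulerMascheroniConstant - t +
      t * (Real.log t + Real.eulerMascheroniConstant)) * Real.exp (-x * t)) = fun t ↦
      (Real.eulerMascheroniConstant + (Real.eulerMascheroniConstant - 1) * t) * Real.exp (-x * t) +
        t * Real.log t * Real.exp (-x * t) := by
    ext t
    ring
  have haffine := integrableOn_affine_mul_exp_neg_mul hx Real.eulerMascheroniConstant
    (Real.eulerMascheroniConstant - 1) 0
  have hlog := integrableOn_mul_log_mul_exp_neg_mul hx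
  rw [hsplit]
  refine ⟨haffine.add hlog, ?_⟩
  rw [integral_add haffine hlog, integral_affine_mul_exp_neg_mul hx,
    integral_mul_log_mul_exp_neg_mul hx, mul_zero, mul_zero, Real.exp_zero]
  field_simp
  ring

lemma integrableOn_gammaMajorant_mul_exp {x : ℝ} (hx : 2 < x) :
    IntegrableOn (fun t ↦ gammaMajorant t * Real.exp (-x * t)) (Ioi 0) := by
  simp only [gammaMajorant, add_mul _ (∑ _ ∈ _, _) (Real.exp _)]
  exact (integrableOn_and_sq_mul_integral_elementary (by linarith)).1.add
    (integrableOn_sum_primesLE_and_hasSum hx).1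

lemma sq_mul_laplaceTransform_gammaMajorant {x : ℝ} (hx : 2 < x) :
    (x : ℂ) ^ 2 * laplaceTransform gammaMajorant x =
      Real.eulerMascheroniConstant * x + primeRemainder x -
        Complex.log (riemannZeta₁ (x + 1)) := by
  have hx0 : 0 < x := by linarith
  obtain ⟨hint, helem⟩ := integrableOn_and_sq_mul_integral_elementary hx0
  simp only [laplaceTransform_ofReal, gammaMajorant, add_mul _ (∑ _ ∈ _, _) (Real.exp _)]
  rw [integral_add hint (integrableOn_sum_primesLE_and_hasSum hx).1, Complex.ofReal_add, mul_add,
    sq_mul_integral_sum_primesLE hx, ← Complex.ofReal_pow, ← Complex.ofReal_mul, helem,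
    log_riemannZeta₁_ofReal_add_one hx0]
  push_cast
  ring

end GammaMajorant

section Continuation

open MeasureTheory Topology Set

/-- The right-hand side of `sq_mul_laplaceTransform_gammaMajorant` at complex arguments. -/
noncomputable def logNumerator (s : ℂ) : ℂ :=
  Real.eulerMascheroniConstant * s + primeRemainder s - Complex.log (riemannZeta₁ (s + 1))

/-- The part of the half-plane `-1/2 < re s` on which `logNumerator` avoids the branch cut of the
logarithm. -/
def logNumeratorDomain : Set ℂ :=
  {s | -(1 / 2) < s.re ∧ riemannZeta₁ (s + 1) ∈ Complex.slitPlane}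

lemma isOpen_logNumeratorDomain : IsOpen logNumeratorDomain :=
  (isOpen_lt continuous_const Complex.continuous_re).inter (Complex.isOpen_slitPlane.preimage
    (differentiable_riemannZeta₁.continuous.comp (continuous_add_const 1)))

lemma ofReal_mem_logNumeratorDomain {x : ℝ} (hx : -(1 / 2) < x) :
    (x : ℂ) ∈ logNumeratorDomain := by
  refine ⟨by rwa [Complex.ofReal_re], ?_⟩
  have h := riemannZeta₁_ofReal_mem_slitPlane (show 0 < x + 1 by linarith)
  rwa [Complex.ofReal_add, Complex.ofReal_one] at h

lemma zero_mem_logNumeratorDomain : (0 : ℂ) ∈ logNumeratorDomain := by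
  simpa using ofReal_mem_logNumeratorDomain (x := 0) (by norm_num)

lemma differentiableOn_logNumerator : DifferentiableOn ℂ logNumerator logNumeratorDomain := by
  intro s hs
  have hzeta : DifferentiableAt ℂ (fun s ↦ riemannZeta₁ (s + 1)) s :=
    (differentiable_riemannZeta₁.comp (differentiable_id.add_const 1)).differentiableAt
  exact (((differentiableAt_id.const_mul _).add (differentiableAt_primeRemainder hs.1)).sub
    (hzeta.clog hs.2)).differentiableWithinAt

lemma logNumerator_zero : logNumerator 0 = 0 := by
  simp [logNumerator, primeRemainder_zero, riemannZeta₁_one]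

lemma deriv_logNumerator_zero : deriv logNumerator 0 = 0 := by
  have hone : HasDerivAt riemannZeta₁ Real.eulerMascheroniConstant ((0 : ℂ) + 1) := by
    rw [zero_add, ← deriv_riemannZeta₁_one]
    exact differentiable_riemannZeta₁.differentiableAt.hasDerivAt
  have hlog := (hone.comp_add_const 0 1).clog zero_mem_logNumeratorDomain.2
  have h : HasDerivAt logNumerator _ 0 :=
    (((hasDerivAt_id (0 : ℂ)).const_mul _).add hasDerivAt_primeRemainder_zero).sub hlog
  simp [h.deriv, riemannZeta₁_one]

-- `logNumerator` has a double zero at `0`, so the singularity of `logNumerator s / s ^ 2` there is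
-- removable.
lemma dslope_dslope_logNumerator {s : ℂ} (hs : s ≠ 0) :
    dslope (dslope logNumerator 0) 0 s = logNumerator s / s ^ 2 := by
  rw [dslope_of_ne _ hs, slope_def_field, dslope_of_ne _ hs, slope_def_field, dslope_same,
    deriv_logNumerator_zero, logNumerator_zero, sub_zero, sub_zero, sub_zero, div_div, ← sq]

lemma integrableOn_gammaMajorant_mul_exp_of_eventually_nonneg
    (hev : ∀ᶠ t in atTop, 0 ≤ gammaMajorant t) {x : ℝ} (hx : -(1 / 2) < x) :
    IntegrableOn (fun t ↦ gammaMajorant t * Real.exp (-x * t)) (Ioi 0) := by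
  have hnhds : logNumeratorDomain ∈ 𝓝 0 :=
    isOpen_logNumeratorDomain.mem_nhds zero_mem_logNumeratorDomain
  refine integrableOn_mul_exp_of_differentiableOn (H := dslope (dslope logNumerator 0) 0)
    measurable_gammaMajorant hev (fun _ ↦ integrableOn_gammaMajorant_mul_exp)
    isOpen_logNumeratorDomain (fun _ ↦ ofReal_mem_logNumeratorDomain) ?_ (fun y hy ↦ ?_) hx
  · rw [Complex.differentiableOn_dslope hnhds, Complex.differentiableOn_dslope hnhds]
    exact differentiableOn_logNumerator
  · have hy0 : (y : ℂ) ≠ 0 := mod_cast (show y ≠ 0 by linarith)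
    rw [dslope_dslope_logNumerator hy0, eq_div_iff (pow_ne_zero 2 hy0), mul_comm,
      sq_mul_laplaceTransform_gammaMajorant hy, logNumerator]

lemma exp_eq_riemannZeta₁_of_eventually_gammaMajorant_nonneg
    (hev : ∀ᶠ t in atTop, 0 ≤ gammaMajorant t) {s : ℂ} (hs : -(1 / 2) < s.re) :
    Complex.exp (Real.eulerMascheroniConstant * s + primeRemainder s -
      s ^ 2 * laplaceTransform gammaMajorant s) = riemannZeta₁ (s + 1) := by
  have hopen : IsOpen {z : ℂ | -(1 / 2) < z.re} :=
    isOpen_lt continuous_const Complex.continuous_re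
  have hlaplace (z : ℂ) (hz : -(1 / 2) < z.re) :
      AnalyticAt ℂ (laplaceTransform gammaMajorant) z :=
    analyticAt_laplaceTransform measurable_gammaMajorant
      (fun _ ↦ integrableOn_gammaMajorant_mul_exp_of_eventually_nonneg hev) hz
  have hremainder (z : ℂ) (hz : -(1 / 2) < z.re) : AnalyticAt ℂ primeRemainder z :=
    DifferentiableOn.analyticAt (fun w hw ↦ (differentiableAt_primeRemainder hw)
      |>.differentiableWithinAt) (hopen.mem_nhds hz)
  have hleft : AnalyticOnNhd ℂ (fun z ↦ Complex.exp (Real.eulerMascheroniConstant * z +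
      primeRemainder z - z ^ 2 * laplaceTransform gammaMajorant z)) {z | -(1 / 2) < z.re} :=
    fun z hz ↦ (((analyticAt_const.mul analyticAt_id).add (hremainder z hz)).sub
      ((analyticAt_id.pow 2).mul (hlaplace z hz))).cexp
  have hright (z : ℂ) : AnalyticAt ℂ (fun z ↦ riemannZeta₁ (z + 1)) z :=
    (differentiable_riemannZeta₁.comp (differentiable_id.add_const 1)).analyticAt z
  have hthree : ((3 : ℝ) : ℂ) ∈ {z : ℂ | -(1 / 2) < z.re} := by norm_num
  refine hleft.eqOn_of_preconnected_of_eventuallyEq (fun z _ ↦ hright z)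
    (convex_halfSpace_re_gt _).isPreconnected hthree
    (eventuallyEq_of_eventually_ofReal_eq (hleft _ hthree) (hright _) ?_) hs
  filter_upwards [lt_mem_nhds (show (2 : ℝ) < 3 by norm_num)] with x hx
  have hne := Complex.slitPlane_ne_zero
    (ofReal_mem_logNumeratorDomain (show -(1 / 2) < x by linarith)).2
  rw [sq_mul_laplaceTransform_gammaMajorant hx, sub_sub_cancel, Complex.exp_log hne]

lemma riemannHypothesis_of_eventually_gammaMajorant_nonneg
    (hev : ∀ᶠ t in atTop, 0 ≤ gammaMajorant t) : RiemannHypothesis := by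
  refine riemannHypothesis_of_riemannZeta₁_ne_zero fun s hs ↦ ?_
  have hre : -(1 / 2) < (s - 1).re := by
    rw [Complex.sub_re, Complex.one_re]
    linarith
  rw [← sub_add_cancel s 1, ← exp_eq_riemannZeta₁_of_eventually_gammaMajorant_nonneg hev hre]
  exact Complex.exp_ne_zero _

end Continuation

/-- If RH is false, then `γ_r < e^{-γ}` for infinitely many `r`; in particular
`Γ = inf_r γ_r < e^{-γ}`. -/
theorem gammaR_lt_of_not_RH (hRH : ¬ RiemannHypothesis) :
    {r : ℕ | gammaR r < Real.exp (-Real.eulerMascheroniConstant)}.Infinite ∧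
    (⨅ r : ℕ, gammaR r) < Real.exp (-Real.eulerMascheroniConstant) := by
  have hinf : {r : ℕ | gammaR r < Real.exp (-Real.eulerMascheroniConstant)}.Infinite :=
    fun hfin ↦ hRH <| riemannHypothesis_of_eventually_gammaMajorant_nonneg <|
      eventually_gammaMajorant_nonneg hfin
  obtain ⟨r, hr⟩ := hinf.nonempty
  exact ⟨hinf, (ciInf_le ⟨0, Set.forall_mem_range.2 gammaR_nonneg⟩ r).trans_lt hr⟩
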